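/- (Colorful Tverberg theorem) Let r be a power of a prime and let t ≥ 2r−1. Let X ⊂ ℝ^d be a set of (d+1)·t points, colored with d+1 colors so that each color is used on exactly t points. Then there exist r pairwise disjoint subsets X_1, …, X_r ⊆ X such that each X_i has exactly d+1 points carrying all d+1 colors, and ⋂_{i=1}^r conv X_i ≠ ∅. -/

import Mathlib

namespace CT
set_option linter.unusedSectionVars false
open Finset Matrix

section phi
variable {L : Type*} [Fintype L] [DecidableEq L]

open Classical in
/-- signed indicator that `u` lies in the open cone of the rows of `A` -/
noncomputable def phi (u : L → ℝ) (A : Matrix L L ℝ) : ℤ :=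
  if ∃ c : L → ℝ, (∀ l, 0 < c l) ∧ c ᵥ* A = u then ((SignType.sign A.det : SignType) : ℤ) else 0

lemma vecMul_inj {A : Matrix L L ℝ} (hA : A.det ≠ 0) {c c' : L → ℝ}
    (h : c ᵥ* A = c' ᵥ* A) : c = c' := by
  have hu : IsUnit A.det := isUnit_iff_ne_zero.mpr hA
  have := congrArg (fun x => x ᵥ* A⁻¹) h
  simpa [Matrix.vecMul_vecMul, Matrix.mul_nonsing_inv A hu] using this

lemma exists_coords {A : Matrix L L ℝ} (hA : A.det ≠ 0) (u : L → ℝ) :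
    ∃ c : L → ℝ, c ᵥ* A = u := by
  have hu : IsUnit A.det := isUnit_iff_ne_zero.mpr hA
  exact ⟨u ᵥ* A⁻¹, by simp [Matrix.vecMul_vecMul, Matrix.nonsing_inv_mul A hu]⟩

open Classical in
lemma phi_eq {A : Matrix L L ℝ} (hA : A.det ≠ 0) {c u : L → ℝ} (hc : c ᵥ* A = u) :
    phi u A = ((SignType.sign A.det : SignType) : ℤ) * if ∀ l, 0 < c l then 1 else 0 := by
  unfold phi
  by_cases h : ∀ l, 0 < c l
  · rw [if_pos ⟨c, h, hc⟩, if_pos h, mul_one]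
  · rw [if_neg, if_neg h, mul_zero]
    rintro ⟨c', h', hc'⟩
    have := vecMul_inj hA (hc.trans hc'.symm)
    exact h (this ▸ h')

lemma vecMul_eq_sum (c : L → ℝ) (A : Matrix L L ℝ) : c ᵥ* A = ∑ k, c k • A k := by
  ext m
  simp [Matrix.vecMul, dotProduct]

lemma det_updateRow_vecMul (A : Matrix L L ℝ) (c : L → ℝ) (l : L) :
    (A.updateRow l (c ᵥ* A)).det = c l * A.det := by
  rw [vecMul_eq_sum]
  simpa using Matrix.det_updateRow_sum A l c

open Classical in
lemma line_lemma (u v : L → ℝ) (hu : ∀ l, u l ≠ 0) (hv : ∀ l, v l ≠ 0)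
    (huv : ∀ l m, l ≠ m → u m - u l / v l * v m ≠ 0) :
    ∑ l, ((SignType.sign (v l) : SignType) : ℤ) *
      (if 0 < u l / v l ∧ ∀ m, m ≠ l → 0 < u m - u l / v l * v m then 1 else 0)
     = (if ∀ l, 0 < u l then 1 else 0) - (if ∀ l, v l < 0 then 1 else 0) := by
  set R : L → Prop := fun l => 0 < u l / v l ∧ ∀ m, m ≠ l → 0 < u m - u l / v l * v m with hR
  set Jn : Prop := ∃ t : ℝ, 0 ≤ t ∧ ∀ m, 0 < u m - t * v m with hJ
  have huJ : (∀ l, 0 < u l) → Jn := fun h => ⟨0, le_rfl, by simpa using h⟩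
  have hvJ : (∀ l, v l < 0) → Jn := by
    intro h
    refine ⟨∑ m, |u m / v m| + 1, by positivity, fun m => ?_⟩
    have h1 : |u m / v m| ≤ ∑ m, |u m / v m| :=
      Finset.single_le_sum (f := fun m => |u m / v m|) (fun _ _ => abs_nonneg _) (mem_univ m)
    have h2 : -(u m / v m) ≤ |u m / v m| := neg_le_abs _
    have h2' : u m / v m ≤ |u m / v m| := le_abs_self _
    have h3 : u m = u m / v m * v m := by rw [div_mul_cancel₀ _ (hv m)]
    have h4 := h m
    rw [h3]
    nlinarith
  have key : ∀ l, R l → ∀ m, m ≠ l → (0 < v l ↔ 0 < v m) → R m → False := by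
    intro l hl m hml hs hm
    have a := hl.2 m hml
    have b := hm.2 l hml.symm
    set x := u l / v l
    set y := u m / v m
    have hx : u l = x * v l := by simp only [x]; rw [div_mul_cancel₀ _ (hv l)]
    have hy : u m = y * v m := by simp only [y]; rw [div_mul_cancel₀ _ (hv m)]
    rw [hy] at a
    rw [hx] at b
    have a' : 0 < (y - x) * v m := by linarith
    have b' : 0 < (x - y) * v l := by linarith
    rcases lt_or_gt_of_ne (hv l) with h | h
    · have h' : v m < 0 := lt_of_le_of_ne (not_lt.mp fun h' => absurd (hs.mpr h') (not_lt.mpr h.le)) (hv m)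
      nlinarith
    · have h' := hs.mp h
      nlinarith
  have RJ : ∀ l, R l → Jn := by
    intro l hl
    -- move slightly off the endpoint
    have hcont : ∀ m, ∀ᶠ t in nhds (u l / v l), m ≠ l → 0 < u m - t * v m := by
      intro m
      by_cases hm : m = l
      · simp [hm]
      · have : ContinuousAt (fun t : ℝ => u m - t * v m) (u l / v l) := by fun_prop
        filter_upwards [this.eventually (lt_mem_nhds (hl.2 m hm))] with t ht _ using ht
    have hall := (Filter.eventually_all.mpr hcont).and (lt_mem_nhds hl.1)
    obtain ⟨ε, hε, hb⟩ := Metric.eventually_nhds_iff.mp hall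
    rcases lt_or_gt_of_ne (hv l) with h | h
    · have hd := hb (y := u l / v l + ε / 2) (by rw [Real.dist_eq]; simp only [add_sub_cancel_left, sub_sub_cancel_left, abs_neg]; rw [abs_of_pos (half_pos hε)]; linarith)
      refine ⟨_, hd.2.le, fun m => ?_⟩
      by_cases hm : m = l
      · subst hm
        have : u m - (u m / v m + ε / 2) * v m = - (ε / 2) * v m := by
          field_simp [hv m]; ring
        rw [this]; nlinarith
      · exact hd.1 m hm
    · have hd := hb (y := u l / v l - ε / 2) (by rw [Real.dist_eq]; simp only [add_sub_cancel_left, sub_sub_cancel_left, abs_neg]; rw [abs_of_pos (half_pos hε)]; linarith)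
      refine ⟨_, hd.2.le, fun m => ?_⟩
      by_cases hm : m = l
      · subst hm
        have : u m - (u m / v m - ε / 2) * v m = (ε / 2) * v m := by
          field_simp [hv m]; ring
        rw [this]; nlinarith
      · exact hd.1 m hm
  have P1 : Jn → (¬ ∀ l, v l < 0) → ∃ l, 0 < v l ∧ R l := by
    rintro ⟨t, ht, hJt⟩ hnv
    push Not at hnv
    obtain ⟨l0, hl0⟩ := hnv
    have hne : (univ.filter fun l => 0 < v l).Nonempty :=
      ⟨l0, by simpa using lt_of_le_of_ne hl0 (hv l0).symm⟩
    obtain ⟨l, hl, hmin⟩ := Finset.exists_min_image _ (fun l => u l / v l) hne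
    simp only [mem_filter, mem_univ, true_and] at hl hmin
    have htl : t < u l / v l := by rw [lt_div_iff₀ hl]; linarith [hJt l]
    refine ⟨l, hl, lt_of_le_of_lt ht htl, fun m hm => ?_⟩
    rcases lt_or_gt_of_ne (hv m) with h | h
    · nlinarith [hJt m]
    · have h1 := hmin m h
      have h2 := huv l m hm.symm
      rw [le_div_iff₀ h] at h1
      exact lt_of_le_of_ne (by linarith) h2.symm
  have P2 : Jn → (¬ ∀ l, 0 < u l) → ∃ l, v l < 0 ∧ R l := by
    rintro ⟨t, ht, hJt⟩ hnu
    push Not at hnu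
    obtain ⟨l0, hl0⟩ := hnu
    have hl0' : u l0 < 0 := lt_of_le_of_ne hl0 (hu l0)
    have hv0 : v l0 < 0 := by
      by_contra hc
      push Not at hc
      nlinarith [hJt l0, mul_nonneg ht hc]
    have hne : (univ.filter fun l => v l < 0).Nonempty := ⟨l0, by simpa using hv0⟩
    obtain ⟨l, hl, hmax⟩ := Finset.exists_max_image _ (fun l => u l / v l) hne
    simp only [mem_filter, mem_univ, true_and] at hl hmax
    have htl : u l / v l < t := by rw [div_lt_iff_of_neg hl]; linarith [hJt l]
    refine ⟨l, hl, lt_of_lt_of_le (div_pos_of_neg_of_neg hl0' hv0) (hmax l0 hv0), fun m hm => ?_⟩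
    rcases lt_or_gt_of_ne (hv m) with h | h
    · have h1 := hmax m h
      have h2 := huv l m hm.symm
      rw [div_le_iff_of_neg h] at h1
      exact lt_of_le_of_ne (by linarith) h2.symm
    · nlinarith [hJt m]
  have hsplit : ∑ l, ((SignType.sign (v l) : SignType) : ℤ) * (if R l then 1 else 0)
      = (if ∃ l, 0 < v l ∧ R l then 1 else 0) - (if ∃ l, v l < 0 ∧ R l then 1 else 0) := by
    have e : ∀ l, ((SignType.sign (v l) : SignType) : ℤ) * (if R l then 1 else 0)
      = (if 0 < v l ∧ R l then 1 else 0) - (if v l < 0 ∧ R l then 1 else 0) := by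
      intro l
      rcases lt_or_gt_of_ne (hv l) with h | h
      · simp [h, h.not_gt, sign_neg h]; split_ifs <;> rfl
      · simp [h, h.not_gt, sign_pos h]
    rw [Finset.sum_congr rfl fun l _ => e l, Finset.sum_sub_distrib]
    congr 1
    · by_cases h : ∃ l, 0 < v l ∧ R l
      · obtain ⟨l, hl⟩ := h
        rw [if_pos ⟨l, hl⟩, Finset.sum_eq_single l, if_pos hl]
        · intro m _ hm
          rw [if_neg]
          exact fun hm' => key l hl.2 m hm (by simp [hl.1, hm'.1]) hm'.2
        · simp
      · rw [if_neg h]; push Not at h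
        exact Finset.sum_eq_zero fun l _ => if_neg fun hl => h l hl.1 hl.2
    · by_cases h : ∃ l, v l < 0 ∧ R l
      · obtain ⟨l, hl⟩ := h
        rw [if_pos ⟨l, hl⟩, Finset.sum_eq_single l, if_pos hl]
        · intro m _ hm
          rw [if_neg]
          exact fun hm' => key l hl.2 m hm (by simp [hl.1.not_gt, hm'.1.not_gt]) hm'.2
        · simp
      · rw [if_neg h]; push Not at h
        exact Finset.sum_eq_zero fun l _ => if_neg fun hl => h l hl.1 hl.2
  rw [hsplit]
  by_cases hJJ : Jn
  · have e1 : (∃ l, 0 < v l ∧ R l) ↔ ¬ ∀ l, v l < 0 :=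
      ⟨fun ⟨l, hl, _⟩ h => absurd (h l) hl.not_gt, P1 hJJ⟩
    have e2 : (∃ l, v l < 0 ∧ R l) ↔ ¬ ∀ l, 0 < u l := by
      refine ⟨fun ⟨l, hl, hR⟩ h => ?_, P2 hJJ⟩
      exact absurd hR.1 (div_neg_of_pos_of_neg (h l) hl).not_gt
    rw [if_congr e1 rfl rfl, if_congr e2 rfl rfl]
    split_ifs <;> simp_all
  · rw [if_neg, if_neg, if_neg, if_neg]
    · exact fun h => hJJ (hvJ h)
    · exact fun h => hJJ (huJ h)
    · exact fun ⟨l, _, h⟩ => hJJ (RJ l h)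
    · exact fun ⟨l, _, h⟩ => hJJ (RJ l h)

/-- the cocycle identity -/
lemma cocycle (A : Matrix L L ℝ) (u v : L → ℝ) (hA : A.det ≠ 0)
    (hu : ∀ l, (A.updateRow l u).det ≠ 0) (hv : ∀ l, (A.updateRow l v).det ≠ 0)
    (huv : ∀ l m, l ≠ m → ((A.updateRow l v).updateRow m u).det ≠ 0) :
    ∑ l, phi u (A.updateRow l v) = phi u A - phi (-v) A := by
  classical
  obtain ⟨c, hc⟩ := exists_coords hA u
  obtain ⟨e, he⟩ := exists_coords hA v
  have hcl : ∀ l, c l ≠ 0 := by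
    intro l h
    apply hu l
    rw [← hc, det_updateRow_vecMul, h, zero_mul]
  have dv : ∀ l, (A.updateRow l v).det = e l * A.det := by
    intro l
    rw [← he, det_updateRow_vecMul]
  have hel : ∀ l, e l ≠ 0 := by
    intro l h
    apply hv l
    rw [dv, h, zero_mul]
  have hb : ∀ l, (fun m => if m = l then c l / e l else c m - c l / e l * e m) ᵥ*
      (A.updateRow l v) = u := by
    intro l
    rw [vecMul_eq_sum, ← Finset.add_sum_erase _ _ (mem_univ l)]
    have h1 : ∑ k ∈ univ.erase l, (if k = l then c l / e l else c k - c l / e l * e k) •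
        (A.updateRow l v) k = ∑ k ∈ univ.erase l, (c k - c l / e l * e k) • A k := by
      apply Finset.sum_congr rfl
      intro k hk
      have hk := Finset.ne_of_mem_erase hk
      rw [if_neg hk, Matrix.updateRow_ne hk]
    have h2 : ∑ k ∈ univ.erase l, (c k - c l / e l * e k) • A k
        = ∑ k, (c k - c l / e l * e k) • A k := by
      rw [← Finset.add_sum_erase _ _ (mem_univ l)]
      rw [div_mul_cancel₀ _ (hel l), sub_self, zero_smul, zero_add]
    rw [h1, h2, if_pos rfl, Matrix.updateRow_self]
    simp only [sub_smul, Finset.sum_sub_distrib, mul_smul, ← Finset.smul_sum]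
    rw [← vecMul_eq_sum, ← vecMul_eq_sum, hc, he]
    simp
  have hne : ∀ l m, l ≠ m → c m - c l / e l * e m ≠ 0 := by
    intro l m hlm h
    apply huv l m hlm
    have := det_updateRow_vecMul (A.updateRow l v)
      (fun m => if m = l then c l / e l else c m - c l / e l * e m) m
    rw [hb l, if_neg hlm.symm, h, zero_mul] at this
    exact this
  have hneg : (-e) ᵥ* A = -v := by rw [Matrix.neg_vecMul, he]
  have h3 : ∀ l, phi u (A.updateRow l v) = ((SignType.sign A.det : SignType) : ℤ) *
      (((SignType.sign (e l) : SignType) : ℤ) *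
      (if 0 < c l / e l ∧ ∀ m, m ≠ l → 0 < c m - c l / e l * e m then 1 else 0)) := by
    intro l
    rw [phi_eq (hv l) (hb l), dv l, sign_mul]
    have : (∀ m, 0 < (if m = l then c l / e l else c m - c l / e l * e m)) ↔
       (0 < c l / e l ∧ ∀ m, m ≠ l → 0 < c m - c l / e l * e m) := by
      constructor
      · intro h
        refine ⟨by simpa using h l, fun m hm => by simpa [hm] using h m⟩
      · rintro ⟨h1, h2⟩ m
        by_cases hm : m = l
        · simpa [hm] using h1
        · simpa [hm] using h2 m hm
    rw [if_congr this rfl rfl]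
    push_cast
    ring
  rw [Finset.sum_congr rfl fun l _ => h3 l, ← Finset.mul_sum, line_lemma c e hcl hel hne,
    phi_eq hA hc, phi_eq hA hneg, mul_sub]
  simp

lemma phi_mul (u : L → ℝ) (A T : Matrix L L ℝ) (hT : 0 < T.det) :
    phi (u ᵥ* T) (A * T) = phi u A := by
  unfold phi
  rw [Matrix.det_mul, sign_mul, sign_pos hT, mul_one]
  congr 1
  apply propext
  apply exists_congr
  intro c
  apply and_congr Iff.rfl
  rw [← Matrix.vecMul_vecMul]
  exact ⟨fun h => vecMul_inj hT.ne' h, fun h => by rw [h]⟩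

lemma phi_perm (u : L → ℝ) (A : Matrix L L ℝ) (π : Equiv.Perm L) :
    phi u (A.submatrix π id) = (Equiv.Perm.sign π : ℤ) * phi u A := by
  have hiff : (∃ c : L → ℝ, (∀ l, 0 < c l) ∧ c ᵥ* A.submatrix π id = u) ↔
     (∃ c : L → ℝ, (∀ l, 0 < c l) ∧ c ᵥ* A = u) := by
    constructor
    · rintro ⟨c, hc, h⟩
      refine ⟨c ∘ π.symm, fun l => hc _, ?_⟩
      rw [← h]
      ext m
      simp only [Matrix.vecMul, dotProduct, Function.comp]
      exact Fintype.sum_equiv π.symm _ _ (by simp)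
    · rintro ⟨c, hc, h⟩
      refine ⟨c ∘ π, fun l => hc _, ?_⟩
      rw [← h]
      ext m
      simp only [Matrix.vecMul, dotProduct, Function.comp]
      exact Fintype.sum_equiv π _ _ (by simp)
  unfold phi
  rw [Matrix.det_permute, sign_mul]
  by_cases h : (∃ c : L → ℝ, (∀ l, 0 < c l) ∧ c ᵥ* A = u)
  · rw [if_pos h, if_pos (hiff.mpr h)]
    push_cast
    congr 1
    rcases Int.units_eq_one_or (Equiv.Perm.sign π) with h | h <;> rw [h] <;> simp
  · rw [if_neg h, if_neg (fun h' => h (hiff.mp h')), mul_zero]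

end phi
end CT

namespace CT
set_option linter.unusedSectionVars false
open Finset Matrix

section rep
variable {J : Type*} [Fintype J] [DecidableEq J] {p : ℕ} [hp : Fact p.Prime]

/-- nonzero residues -/
abbrev K (p : ℕ) := {k : ZMod p // k ≠ 0}

/-- extension by zero -/
def ex (y : J × K p → ℝ) (j : J) (i : ZMod p) : ℝ := if h : i ≠ 0 then y (j, ⟨i, h⟩) else 0

@[simp] lemma ex_zero (y : J × K p → ℝ) (j : J) : ex y j 0 = 0 := by simp [ex]

@[simp] lemma ex_coe (y : J × K p → ℝ) (j : J) (k : K p) : ex y j k.1 = y (j, k) := by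
  simp [ex, k.2]

/-- the shift as a linear map -/
def Tl (J : Type*) (p : ℕ) [Fact p.Prime] (i : ZMod p) : (J × K p → ℝ) →ₗ[ℝ] (J × K p → ℝ) where
  toFun y := fun l => ex y l.1 (l.2.1 - i) - ex y l.1 (-i)
  map_add' y z := by
    ext l
    simp only [ex, Pi.add_apply]
    split_ifs <;> ring
  map_smul' c y := by
    ext l
    simp only [ex, Pi.smul_apply, smul_eq_mul, RingHom.id_apply]
    split_ifs <;> ring

/-- the shift as a matrix -/
noncomputable def T (J : Type*) [Fintype J] [DecidableEq J] (p : ℕ) [Fact p.Prime] (i : ZMod p) :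
    Matrix (J × K p) (J × K p) ℝ :=
  (LinearMap.toMatrix' (Tl J p i))ᵀ

lemma vecMul_T (y : J × K p → ℝ) (i : ZMod p) (l : J × K p) :
    (y ᵥ* T J p i) l = ex y l.1 (l.2.1 - i) - ex y l.1 (-i) := by
  rw [T, Matrix.vecMul_transpose, LinearMap.toMatrix'_mulVec]
  rfl

lemma ex_vecMul_T (y : J × K p → ℝ) (i : ZMod p) (j : J) (k : ZMod p) :
    ex (y ᵥ* T J p i) j k = ex y j (k - i) - ex y j (-i) := by
  by_cases h : k = 0
  · subst h; simp
  · have := ex_coe (y ᵥ* T J p i) j ⟨k, h⟩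
    rw [vecMul_T] at this
    exact this

lemma vecMul_T_T (y : J × K p → ℝ) (i i' : ZMod p) :
    (y ᵥ* T J p i) ᵥ* T J p i' = y ᵥ* T J p (i' + i) := by
  ext l
  rw [vecMul_T, vecMul_T, ex_vecMul_T, ex_vecMul_T]
  have e1 : l.2.1 - i' - i = l.2.1 - (i' + i) := by ring
  have e2 : -i' - i = -(i' + i) := by ring
  rw [e1, e2]; ring

lemma vecMul_T_zero (y : J × K p → ℝ) : y ᵥ* T J p 0 = y := by
  ext l
  rw [vecMul_T]; simp

lemma T_mul (i i' : ZMod p) : T J p i * T J p i' = T J p (i' + i) := by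
  apply Matrix.ext_of_single_vecMul
  intro l
  rw [← Matrix.vecMul_vecMul, vecMul_T_T]

lemma T_zero : T J p 0 = 1 := by
  apply Matrix.ext_of_single_vecMul
  intro l
  rw [vecMul_T_zero, Matrix.vecMul_one]

lemma det_T_pos (h2 : p ≠ 2) (i : ZMod p) : 0 < (T J p i).det := by
  have h : ∃ a : ZMod p, a + a = i := by
    have : (2 : ZMod p) ≠ 0 := by
      intro h
      have h' : ((2 : ℕ) : ZMod p) = 0 := by exact_mod_cast h
      rw [ZMod.natCast_eq_zero_iff] at h'
      exact h2 ((Nat.prime_dvd_prime_iff_eq hp.out Nat.prime_two).mp h')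
    refine ⟨i / 2, ?_⟩
    field_simp
    ring
  obtain ⟨a, rfl⟩ := h
  rw [← T_mul, Matrix.det_mul]
  have : (T J p a).det * (T J p (-a)).det = 1 := by
    rw [← Matrix.det_mul, T_mul, neg_add_cancel, T_zero, Matrix.det_one]
  have h0 : (T J p a).det ≠ 0 := left_ne_zero_of_mul_eq_one this
  exact mul_self_pos.mpr h0

/-- The matrix of the simplex `σ`. -/
noncomputable def Rw (f : Matrix (J × K p) (J × K p) ℝ) (σ : J → Equiv.Perm (ZMod p)) :
    Matrix (J × K p) (J × K p) ℝ :=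
  Matrix.of fun l => f l ᵥ* T J p (σ l.1 l.2.1)

/-- sign of `σ` -/
def eps (σ : J → Equiv.Perm (ZMod p)) : ℤ := ∏ j, (Equiv.Perm.sign (σ j) : ℤ)

/-- the degree -/
noncomputable def D (u : J × K p → ℝ) (f : Matrix (J × K p) (J × K p) ℝ) : ℤ :=
  ∑ σ : J → Equiv.Perm (ZMod p), eps σ * phi u (Rw f σ)

lemma Rw_update (f : Matrix (J × K p) (J × K p) ℝ) (σ : J → Equiv.Perm (ZMod p)) (l : J × K p)
    (a : J × K p → ℝ) :
    Rw (f.updateRow l a) σ = (Rw f σ).updateRow l (a ᵥ* T J p (σ l.1 l.2.1)) := by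
  ext m k
  by_cases h : m = l
  · subst h; simp [Rw]
  · simp [Rw, Matrix.updateRow_ne h]

/-- translate all permutations -/
def shift (i : ZMod p) (σ : J → Equiv.Perm (ZMod p)) : J → Equiv.Perm (ZMod p) :=
  fun j => Equiv.addLeft i * σ j

lemma Rw_shift (f : Matrix (J × K p) (J × K p) ℝ) (σ : J → Equiv.Perm (ZMod p)) (i : ZMod p) :
    Rw f (shift i σ) = Rw f σ * T J p i := by
  ext l m
  have h1 : (Rw f σ * T J p i) l m = ((Rw f σ) l ᵥ* T J p i) m := rfl
  rw [h1]
  simp only [Rw, Matrix.of_apply, shift]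
  have : (Matrix.of fun l => f l ᵥ* T J p (σ l.1 l.2.1)) l = f l ᵥ* T J p (σ l.1 l.2.1) := rfl
  rw [this, vecMul_T_T]
  simp

lemma sign_addLeft (h2 : p ≠ 2) (i : ZMod p) : Equiv.Perm.sign (Equiv.addLeft i) = 1 := by
  have h : ∀ n : ℕ, (Equiv.addLeft i : Equiv.Perm (ZMod p)) ^ n = Equiv.addLeft (n • i) := by
    intro n
    induction n with
    | zero => ext x; simp
    | succ n ih => rw [pow_succ, ih]; ext x; simp [add_mul]
  have h1 := congrArg Equiv.Perm.sign (h p)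
  have h0 : (Equiv.addLeft (p • i) : Equiv.Perm (ZMod p)) = 1 := by
    ext x; simp
  rw [h0, map_pow, map_one] at h1
  rcases Int.units_eq_one_or (Equiv.Perm.sign (Equiv.addLeft i)) with h | h
  · exact h
  · rw [h] at h1
    rw [Odd.neg_one_pow (hp.out.odd_of_ne_two h2)] at h1
    exact absurd h1 (by decide)

lemma eps_shift (h2 : p ≠ 2) (i : ZMod p) (σ : J → Equiv.Perm (ZMod p)) :
    eps (shift i σ) = eps σ := by
  unfold eps shift
  simp [sign_addLeft h2]

lemma dvd_of_shift (j0 : J) (k0 : ZMod p) (h : (J → Equiv.Perm (ZMod p)) → ℤ)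
    (hh : ∀ i σ, h (shift i σ) = h σ) : (p : ℤ) ∣ ∑ σ, h σ := by
  classical
  rw [← Finset.sum_fiberwise univ (fun σ : J → Equiv.Perm (ZMod p) => σ j0 k0) h]
  have : ∀ i : ZMod p, ∑ σ with σ j0 k0 = i, h σ
      = ∑ σ : J → Equiv.Perm (ZMod p) with σ j0 k0 = 0, h σ := by
    intro i
    refine Finset.sum_bij' (fun σ _ => shift (-i) σ) (fun σ _ => shift i σ) ?_ ?_ ?_ ?_ ?_
    · intro σ hσ
      simp only [mem_filter, mem_univ, true_and] at hσ ⊢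
      simp [shift, hσ]
    · intro σ hσ
      simp only [mem_filter, mem_univ, true_and] at hσ ⊢
      simp [shift, hσ]
    · intro σ hσ
      funext j; ext x; simp [shift]
    · intro σ hσ
      funext j; ext x; simp [shift]
    · intro σ hσ
      rw [hh]
  rw [Finset.sum_congr rfl fun i _ => this i, Finset.sum_const, Finset.card_univ, ZMod.card]
  simp

lemma vanish (u : J × K p → ℝ) (f : Matrix (J × K p) (J × K p) ℝ) (l0 l : J × K p) (hl : l ≠ l0)
    (a : J × K p → ℝ) :
    ∑ σ : J → Equiv.Perm (ZMod p), eps σ *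
      phi u ((Rw f σ).updateRow l (a ᵥ* T J p (σ l0.1 l0.2.1))) = 0 := by
  classical
  set g : (J → Equiv.Perm (ZMod p)) → (J → Equiv.Perm (ZMod p)) :=
    fun σ => Function.update σ l.1 (σ l.1 * Equiv.swap l.2.1 0) with hg
  have hgapp : ∀ σ (m : J × K p), m ≠ l → g σ m.1 m.2.1 = σ m.1 m.2.1 := by
    intro σ m hm
    by_cases h1 : m.1 = l.1
    · have h2 : m.2.1 ≠ l.2.1 := fun h => hm (Prod.ext h1 (Subtype.ext h))
      simp only [hg, h1, Function.update_self, Equiv.Perm.mul_apply]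
      rw [Equiv.swap_apply_of_ne_of_ne h2 m.2.2]
    · simp [hg, Function.update_of_ne h1]
  have hgne : ∀ σ, g σ l.1 l.2.1 = σ l.1 0 := by
    intro σ; simp [hg]
  have hgg : ∀ σ, g (g σ) = σ := by
    intro σ
    simp only [hg, Function.update_self, Function.update_idem, mul_assoc, Equiv.swap_mul_self,
      mul_one, Function.update_eq_self]
  have heps : ∀ σ, eps (g σ) = - eps σ := by
    intro σ
    unfold eps
    rw [← Finset.mul_prod_erase _ _ (mem_univ l.1), ← Finset.mul_prod_erase univ (fun j => (Equiv.Perm.sign (σ j) : ℤ)) (mem_univ l.1)]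
    have : ∏ x ∈ univ.erase l.1, (Equiv.Perm.sign (g σ x) : ℤ)
        = ∏ x ∈ univ.erase l.1, (Equiv.Perm.sign (σ x) : ℤ) := by
      apply Finset.prod_congr rfl
      intro x hx
      simp [hg, Function.update_of_ne (Finset.ne_of_mem_erase hx)]
    rw [this]
    simp [hg, Equiv.Perm.sign_swap l.2.2]
  refine Finset.sum_involution (fun σ _ => g σ) ?_ ?_ (fun _ _ => mem_univ _) (fun σ _ => hgg σ)
  · intro σ _
    have : (Rw f (g σ)).updateRow l (a ᵥ* T J p (g σ l0.1 l0.2.1))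
        = (Rw f σ).updateRow l (a ᵥ* T J p (σ l0.1 l0.2.1)) := by
      rw [hgapp σ l0 hl.symm]
      ext m k
      by_cases h : m = l
      · subst h; simp
      · rw [Matrix.updateRow_ne h, Matrix.updateRow_ne h]
        simp only [Rw, Matrix.of_apply, hgapp σ m h]
    rw [this, heps]; ring
  · intro σ _ _ h
    have := hgne σ
    rw [h] at this
    exact l.2.2 ((σ l.1).injective this)

lemma step (h2 : p ≠ 2) (u : J × K p → ℝ) (f : Matrix (J × K p) (J × K p) ℝ) (l0 : J × K p)
    (a : J × K p → ℝ)
    (hA : ∀ σ, (Rw f σ).det ≠ 0)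
    (hu : ∀ σ l, ((Rw f σ).updateRow l u).det ≠ 0)
    (hv : ∀ σ l, ((Rw f σ).updateRow l (a ᵥ* T J p (σ l0.1 l0.2.1))).det ≠ 0)
    (huv : ∀ σ l m, l ≠ m →
      (((Rw f σ).updateRow l (a ᵥ* T J p (σ l0.1 l0.2.1))).updateRow m u).det ≠ 0) :
    (p : ℤ) ∣ D u (f.updateRow l0 a) - D u f := by
  have h1 : ∀ σ : J → Equiv.Perm (ZMod p), eps σ * phi u (Rw (f.updateRow l0 a) σ)
      - eps σ * phi u (Rw f σ)
      = - (eps σ * phi (-(a ᵥ* T J p (σ l0.1 l0.2.1))) (Rw f σ))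
        - ∑ l ∈ univ.erase l0, eps σ *
          phi u ((Rw f σ).updateRow l (a ᵥ* T J p (σ l0.1 l0.2.1))) := by
    intro σ
    have := cocycle _ u _ (hA σ) (hu σ) (hv σ) (huv σ)
    rw [← Finset.add_sum_erase _ _ (mem_univ l0)] at this
    rw [← Finset.mul_sum, Rw_update]
    linear_combination (eps σ) * this
  unfold D
  rw [← Finset.sum_sub_distrib, Finset.sum_congr rfl fun σ _ => h1 σ, Finset.sum_sub_distrib,
    Finset.sum_comm, Finset.sum_eq_zero (s := univ.erase l0)
      (fun l hl => vanish u f l0 l (Finset.ne_of_mem_erase hl) a), sub_zero,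
    Finset.sum_neg_distrib, dvd_neg]
  refine dvd_of_shift l0.1 l0.2.1 _ ?_
  intro i σ
  rw [eps_shift h2, Rw_shift]
  have : a ᵥ* T J p (shift i σ l0.1 l0.2.1) = (a ᵥ* T J p (σ l0.1 l0.2.1)) ᵥ* T J p i := by
    rw [vecMul_T_T]; simp [shift]
  rw [this, ← Matrix.neg_vecMul, phi_mul _ _ _ (det_T_pos h2 i)]

/-- Sarkaria vectors -/
def src (x : J × K p → J → ℝ) : Matrix (J × K p) (J × K p) ℝ :=
  Matrix.of fun l m => - x l m.1

lemma Rw_src (x : J × K p → J → ℝ) (σ : J → Equiv.Perm (ZMod p)) (l m : J × K p) :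
    Rw (src x) σ l m = x l m.1 * ((if σ l.1 l.2.1 = m.2.1 then 1 else 0)
      - (if σ l.1 l.2.1 = 0 then 1 else 0)) := by
  simp only [Rw, Matrix.of_apply, vecMul_T]
  have h : ∀ i : ZMod p, ex (src x l) m.1 i = if i = 0 then 0 else - x l m.1 := by
    intro i
    by_cases hi : i = 0
    · simp [hi]
    · simp [ex, hi, src]
  rw [h, h]
  simp only [neg_eq_zero, sub_eq_zero, eq_comm (a := m.2.1)]
  split_ifs <;> ring

lemma sum_K (c : J × K p → ℝ) (j : J) (s : Equiv.Perm (ZMod p)) (i : ZMod p) :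
    ∑ k : K p, c (j, k) * (if s k.1 = i then 1 else 0) = ex c j (s.symm i) := by
  by_cases h : s.symm i = 0
  · rw [h, ex_zero]
    apply Finset.sum_eq_zero
    intro k _
    rw [if_neg, mul_zero]
    intro hk
    apply k.2
    rw [← hk] at h
    simpa using h
  · rw [Finset.sum_eq_single (⟨s.symm i, h⟩ : K p)]
    · simp [ex, h]
    · intro k _ hk
      rw [if_neg, mul_zero]
      intro h'
      exact hk (Subtype.ext (by simp [← h']))
    · simp

/-- target configuration -/
def tg : Matrix (J × K p) (J × K p) ℝ := src fun l j => if l.1 = j then 1 else 0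

lemma vecMul_tg (c : J × K p → ℝ) (σ : J → Equiv.Perm (ZMod p)) (m : J × K p) :
    (c ᵥ* Rw tg σ) m = ex c m.1 ((σ m.1).symm m.2.1) - ex c m.1 ((σ m.1).symm 0) := by
  simp only [Matrix.vecMul, dotProduct, tg, Rw_src]
  rw [Fintype.sum_prod_type, Finset.sum_eq_single m.1]
  · simp only [if_true, one_mul, mul_sub, Finset.sum_sub_distrib]
    rw [sum_K, sum_K]
  · intro j _ hj
    simp [hj]
  · simp

/-- coordinates in the target configuration -/
def cf (u : J × K p → ℝ) (σ : J → Equiv.Perm (ZMod p)) (l : J × K p) : ℝ :=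
  ex u l.1 (σ l.1 l.2.1) - ex u l.1 (σ l.1 0)

lemma cf_spec (u : J × K p → ℝ) (σ : J → Equiv.Perm (ZMod p)) : cf u σ ᵥ* Rw tg σ = u := by
  have h : ∀ j i, ex (cf u σ) j i = ex u j (σ j i) - ex u j (σ j 0) := by
    intro j i
    by_cases hi : i = 0
    · simp [hi]
    · simp [ex, hi, cf]
  ext m
  rw [vecMul_tg, h, h]
  simp

lemma det_tg (σ : J → Equiv.Perm (ZMod p)) : (Rw (tg : Matrix (J × K p) (J × K p) ℝ) σ).det ≠ 0 := by
  have : Function.Surjective fun v => v ᵥ* Rw (tg : Matrix (J × K p) (J × K p) ℝ) σ :=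
    fun u => ⟨_, cf_spec u σ⟩
  rw [Matrix.vecMul_surjective_iff_isUnit, Matrix.isUnit_iff_isUnit_det] at this
  exact this.ne_zero

lemma D_tg (u : J × K p → ℝ)
    (hu : ∀ σ l, ((Rw tg σ).updateRow l u).det ≠ 0) : ¬ (p : ℤ) ∣ D u tg := by
  classical
  have hc : ∀ σ l, cf u σ l ≠ 0 := by
    intro σ l h
    apply hu σ l
    have := det_updateRow_vecMul (Rw tg σ) (cf u σ) l
    rw [cf_spec, h, zero_mul] at this
    exact this
  have hm : ∀ j, ∃ i, ∀ i', ex u j i ≤ ex u j i' := fun j => Finite.exists_min _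
  choose m hm using hm
  have hinj : ∀ j i, i ≠ m j → ex u j (m j) < ex u j i := by
    intro j i hi
    refine lt_of_le_of_ne (hm j i) ?_
    intro h
    have hne : Equiv.swap 0 (m j) i ≠ 0 := by
      intro h'
      apply hi
      have := congrArg (Equiv.swap 0 (m j)) h'
      simpa using this
    have := hc (fun _ => Equiv.swap 0 (m j)) (j, ⟨Equiv.swap 0 (m j) i, hne⟩)
    simp [cf, h] at this
  set s : J → Equiv.Perm (ZMod p) := fun j => Equiv.swap 0 (m j) with hs
  set e : (J → Equiv.Perm (K p)) → (J → Equiv.Perm (ZMod p)) :=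
    fun π j => s j * Equiv.Perm.ofSubtype (π j) with he
  have he0 : ∀ π j, e π j 0 = m j := by
    intro π j
    have : Equiv.Perm.ofSubtype (π j) (0 : ZMod p) = 0 :=
      Equiv.Perm.ofSubtype_apply_of_not_mem _ (by simp)
    simp [he, this, hs]
  have hphi0 : phi u (Rw tg s) = ((SignType.sign (Rw (tg : Matrix (J × K p) (J × K p) ℝ) s).det : SignType) : ℤ) := by
    rw [phi_eq (det_tg s) (cf_spec u s), if_pos, mul_one]
    intro l
    have : s l.1 0 = m l.1 := by simp [hs]
    simp only [cf, this, sub_pos]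
    apply hinj
    intro h
    rw [← this] at h
    exact l.2.2 ((s l.1).injective h)
  have hsum : ∑ π : J → Equiv.Perm (K p), eps s * phi u (Rw tg s) = D u tg := by
    unfold D
    refine Finset.sum_of_injOn e ?_ (fun _ _ => by simp) ?_ ?_
    · intro π _ π' _ h
      funext j
      have := congrFun h j
      exact Equiv.Perm.ofSubtype_injective (mul_left_cancel this)
    · intro σ _ hσ
      rw [phi_eq (det_tg σ) (cf_spec u σ), if_neg, mul_zero, mul_zero]
      intro hpos
      apply hσ
      have h0 : ∀ j, σ j 0 = m j := by
        intro j
        by_contra hne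
        have hk : (σ j).symm (m j) ≠ 0 := by
          intro h
          apply hne
          rw [← h]; simp
        have := hpos (j, ⟨_, hk⟩)
        simp only [cf, Equiv.apply_symm_apply, sub_pos] at this
        exact absurd (hm j (σ j 0)) (not_le.mpr this)
      have hfix : ∀ j x, ((s j)⁻¹ * σ j) x ≠ 0 ↔ x ≠ 0 := by
        intro j x
        have h00 : ((s j)⁻¹ * σ j) 0 = 0 := by simp [h0, hs]
        rw [not_iff_not]
        constructor
        · intro h
          exact ((s j)⁻¹ * σ j).injective (h.trans h00.symm)
        · rintro rfl
          exact h00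
      refine ⟨fun j => ((s j)⁻¹ * σ j).subtypePerm (hfix j), by simp, ?_⟩
      funext j
      simp only [he]
      rw [Equiv.Perm.ofSubtype_subtypePerm]
      · simp
      · intro x hx h
        apply hx
        rw [h]
        simp [h0, hs]
    · intro π _
      have hR : Rw (tg : Matrix (J × K p) (J × K p) ℝ) (e π) =
          (Rw tg s).submatrix (Equiv.prodCongrRight π) id := by
        ext l n
        rw [Matrix.submatrix_apply]
        simp only [tg, Rw_src]
        have : e π l.1 l.2.1 = s l.1 (π l.1 l.2).1 := by
          simp only [he, Equiv.Perm.mul_apply]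
          rw [Equiv.Perm.ofSubtype_apply_coe]
        simp [this]
      rw [hR, phi_perm, Equiv.Perm.sign_prodCongrRight]
      have : eps (e π) = eps s * ∏ j, (Equiv.Perm.sign (π j) : ℤ) := by
        simp only [eps, he]
        rw [← Finset.prod_mul_distrib]
        apply Finset.prod_congr rfl
        intro j _
        simp [Equiv.Perm.sign_ofSubtype]
      rw [this]
      push_cast
      have hsq : (∏ j, (Equiv.Perm.sign (π j) : ℤ)) * ∏ j, (Equiv.Perm.sign (π j) : ℤ) = 1 := by
        rw [← Finset.prod_mul_distrib]
        apply Finset.prod_eq_one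
        intro j _
        rcases Int.units_eq_one_or (Equiv.Perm.sign (π j)) with h | h <;> rw [h] <;> simp
      linear_combination -(eps s * phi u (Rw tg s)) * hsq
  rw [← hsum, Finset.sum_const, Finset.card_univ, hphi0]
  have hunit : IsUnit (eps s * ((SignType.sign (Rw (tg : Matrix (J × K p) (J × K p) ℝ) s).det : SignType) : ℤ)) := by
    apply IsUnit.mul
    · unfold eps
      rw [← Units.coe_prod]
      exact Units.isUnit _
    · rcases lt_or_gt_of_ne (det_tg (J := J) (p := p) s) with h | h
      · rw [sign_neg h]; simp
      · rw [sign_pos h]; simp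
  rw [nsmul_eq_mul, hunit.dvd_mul_right, Int.natCast_dvd_natCast]
  have hcard : Fintype.card (J → Equiv.Perm (K p)) = ((p - 1).factorial) ^ Fintype.card J := by
    rw [Fintype.card_fun, Fintype.card_perm]
    congr 2
    rw [Fintype.card_subtype_compl, ZMod.card]
    simp
  rw [hcard]
  intro h
  have := hp.out.dvd_of_dvd_pow h
  rw [hp.out.dvd_factorial] at this
  have := hp.out.pos
  omega

end rep
end CT

namespace CT
set_option linter.unusedSectionVars false
open Finset Matrix

lemma dense_generic {E ι : Type*} [NormedAddCommGroup E] [NormedSpace ℝ E] [CompleteSpace E]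
    [Finite ι] (P : ι → E → ℝ) (Q : ι → Prop) (hP : ∀ i, AnalyticOnNhd ℝ (P i) Set.univ)
    (hne : ∀ i, Q i → ∃ x, P i x ≠ 0) : Dense {x | ∀ i, Q i → P i x ≠ 0} := by
  have h1 : {x | ∀ i, Q i → P i x ≠ 0} = ⋂ i : {i // Q i}, {x | P i.1 x ≠ 0} := by
    ext x; simp
  rw [h1]
  apply dense_iInter_of_isOpen
  · intro i
    have : Continuous (P i.1) := by
      rw [← continuousOn_univ]; exact (hP i.1).continuousOn
    exact isOpen_ne_fun this continuous_const
  · rintro ⟨i, hi⟩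
    obtain ⟨x, hx⟩ := hne i hi
    intro z
    by_contra hz
    apply hx
    have hev : P i =ᶠ[nhds z] 0 := by
      rw [mem_closure_iff_frequently] at hz
      simpa [Filter.EventuallyEq] using hz
    exact (hP i).eqOn_zero_of_preconnected_of_eventuallyEq_zero isPreconnected_univ
      (Set.mem_univ z) hev (Set.mem_univ x)

section gen
variable {J : Type*} [Fintype J] [DecidableEq J] {p : ℕ} [hp : Fact p.Prime]

/-- optional row update -/
def upd {L : Type*} [DecidableEq L] (A : Matrix L L ℝ) (o : Option L) (v : L → ℝ) :
    Matrix L L ℝ :=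
  Matrix.of fun l k => if o = some l then v k else A l k

lemma upd_none {L : Type*} [DecidableEq L] (A : Matrix L L ℝ) (v : L → ℝ) :
    upd A none v = A := by
  ext l k; simp [upd]

lemma upd_some {L : Type*} [DecidableEq L] (A : Matrix L L ℝ) (l : L) (v : L → ℝ) :
    upd A (some l) v = A.updateRow l v := by
  ext m k
  by_cases h : m = l
  · subst h; simp [upd]
  · simp [upd, Matrix.updateRow_ne h, Ne.symm h]

/-- mixture of target and source configuration -/
def mix (S : Finset (J × K p)) (f : Matrix (J × K p) (J × K p) ℝ) :
    Matrix (J × K p) (J × K p) ℝ :=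
  Matrix.of fun l k => if l ∈ S then tg l k else f l k

lemma Rw_mix (S : Finset (J × K p)) (f : Matrix (J × K p) (J × K p) ℝ)
    (σ : J → Equiv.Perm (ZMod p)) (l k : J × K p) :
    Rw (mix S f) σ l k = if l ∈ S then Rw tg σ l k else Rw f σ l k := by
  by_cases h : l ∈ S
  · have : mix S f l = tg l := by ext k; simp [mix, h]
    simp only [Rw, Matrix.of_apply, this, h, if_true]
  · have : mix S f l = f l := by ext k; simp [mix, h]
    simp only [Rw, Matrix.of_apply, this, h, if_false]

lemma exists_Rw (B : Matrix (J × K p) (J × K p) ℝ) (σ : J → Equiv.Perm (ZMod p)) :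
    ∃ f, Rw f σ = B := by
  refine ⟨Matrix.of fun l => B l ᵥ* T J p (-(σ l.1 l.2.1)), ?_⟩
  ext l k
  have h : (Matrix.of fun l => B l ᵥ* T J p (-(σ l.1 l.2.1))) l
    = B l ᵥ* T J p (-(σ l.1 l.2.1)) := rfl
  simp only [Rw, Matrix.of_apply]
  rw [h, vecMul_T_T, add_neg_cancel, vecMul_T_zero]

/-- parameter space -/
abbrev E (J : Type*) [Fintype J] (p : ℕ) [Fact p.Prime] :=
  ((J × K p) → (J × K p) → ℝ) × ((J × K p) → ℝ)

/-- index set of the genericity conditions -/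
abbrev Ix (J : Type*) [Fintype J] (p : ℕ) [Fact p.Prime] :=
  Finset (J × K p) × (J → Equiv.Perm (ZMod p)) × (J × K p) × Option (J × K p) × Option (J × K p)

/-- genericity matrices -/
noncomputable def gm (i : Ix J p) (x : E J p) : Matrix (J × K p) (J × K p) ℝ :=
  upd (upd (Rw (mix i.1 (Matrix.of x.1)) i.2.1) i.2.2.2.1 (Rw tg i.2.1 i.2.2.1)) i.2.2.2.2 x.2

/-- admissible indices -/
def Q (i : Ix J p) : Prop := ∀ l, i.2.2.2.1 = some l → i.2.2.1 ∉ i.1 ∧ i.2.2.2.2 ≠ some l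

lemma analytic_gm (i : Ix J p) : AnalyticOnNhd ℝ (fun x : E J p => (gm i x).det) Set.univ := by
  intro x _
  have h1 : ∀ l k, AnalyticAt ℝ (fun x : E J p => x.1 l k) x := by
    intro l k
    exact (((ContinuousLinearMap.proj (R := ℝ) (φ := fun _ : J × K p => ℝ) k).comp
      (ContinuousLinearMap.proj (R := ℝ) (φ := fun _ : J × K p => J × K p → ℝ) l)).comp
      (ContinuousLinearMap.fst ℝ _ _)).analyticAt x
  have h2 : ∀ k, AnalyticAt ℝ (fun x : E J p => x.2 k) x := by
    intro k
    exact ((ContinuousLinearMap.proj (R := ℝ) (φ := fun _ : J × K p => ℝ) k).comp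
      (ContinuousLinearMap.snd ℝ _ _)).analyticAt x
  have h3 : ∀ l k, AnalyticAt ℝ (fun x : E J p => gm i x l k) x := by
    intro l k
    simp only [gm, upd, Matrix.of_apply, Rw_mix]
    split_ifs
    · exact h2 k
    · exact analyticAt_const
    · exact analyticAt_const
    · simp only [Rw, Matrix.of_apply, Matrix.vecMul, dotProduct]
      exact Finset.analyticAt_fun_sum _ fun m _ => (h1 l m).mul analyticAt_const
  simp only [Matrix.det_apply]
  refine Finset.analyticAt_fun_sum _ fun π _ => ?_
  simp only [Units.smul_def, zsmul_eq_mul]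
  exact analyticAt_const.mul (Finset.analyticAt_fun_prod _ fun m _ => h3 _ _)

lemma witness_gm (i : Ix J p) (hi : Q i) : ∃ x : E J p, (gm i x).det ≠ 0 := by
  obtain ⟨S, σ, l0, o, o'⟩ := i
  set R : Matrix (J × K p) (J × K p) ℝ := Rw tg σ with hR
  rcases o with _ | l
  · obtain ⟨f, hf⟩ := exists_Rw R σ
    refine ⟨(f, fun k => match o' with | none => 0 | some m => R m k), ?_⟩
    have : gm (S, σ, l0, none, o') (f, fun k => match o' with | none => 0 | some m => R m k) = R := by
      ext n k
      simp only [gm, upd, Matrix.of_apply, Rw_mix]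
      have e : Rw (Matrix.of f) σ = R := hf
      rw [e]
      rcases o' with _ | m
      · simp [hR]
      · by_cases h : m = n
        · simp [h]
        · simp [h, hR]
    rw [this]
    exact det_tg σ
  · obtain ⟨hl0, hl⟩ := hi l rfl
    simp only at hl0 hl
    obtain ⟨f, hf⟩ := exists_Rw (R.updateRow l0 (R l)) σ
    refine ⟨(f, fun k => o'.elim 0 fun m => if m = l0 then R l k else R m k), ?_⟩
    have : gm (S, σ, l0, some l, o')
        (f, fun k => o'.elim 0 fun m => if m = l0 then R l k else R m k)
        = R.submatrix (Equiv.swap l0 l) id := by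
      ext n k
      simp only [gm, upd, Matrix.of_apply, Rw_mix, Matrix.submatrix_apply, id, ← hR]
      have e : Rw (Matrix.of f) σ = R.updateRow l0 (R l) := hf
      rw [e, Matrix.updateRow_apply, Equiv.swap_apply_def]
      have hS : n ∈ S → n ≠ l0 := fun h h' => hl0 (h' ▸ h)
      clear e hf
      clear_value R
      clear hR
      rcases o' with _ | m
      · simp only [reduceCtorEq, if_false, Option.some.injEq]
        grind
      · have hml : m ≠ l := fun h => hl (by rw [h])
        simp only [Option.some.injEq]
        grind
    rw [this, Matrix.det_permute]
    refine mul_ne_zero ?_ (det_tg σ)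
    exact_mod_cast (Equiv.Perm.sign _).ne_zero

lemma dense_E : Dense {x : E J p | ∀ i, Q i → (gm i x).det ≠ 0} :=
  dense_generic (fun i x => (gm i x).det) Q analytic_gm witness_gm

lemma generic_case (h2 : p ≠ 2) (x : E J p) (hx : ∀ i, Q i → (gm i x).det ≠ 0) :
    ∃ (σ : J → Equiv.Perm (ZMod p)) (c : J × K p → ℝ), (∀ l, 0 < c l) ∧
      c ᵥ* Rw (Matrix.of x.1) σ = x.2 := by
  classical
  set f : Matrix (J × K p) (J × K p) ℝ := Matrix.of x.1
  set u := x.2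
  have hS : ∀ S : Finset (J × K p), (p : ℤ) ∣ D u (mix S f) - D u f := by
    intro S
    induction S using Finset.induction_on with
    | empty =>
      have : mix ∅ f = f := by ext l k; simp [mix]
      rw [this, sub_self]; exact dvd_zero _
    | insert l0 S hl0 ih =>
      have hm : mix (insert l0 S) f = (mix S f).updateRow l0 (tg l0) := by
        ext n k
        by_cases h : n = l0
        · subst h; simp [mix]
        · rw [Matrix.updateRow_ne h]; simp [mix, h]
      rw [hm]
      have hrow : ∀ σ : J → Equiv.Perm (ZMod p),
        tg l0 ᵥ* T J p (σ l0.1 l0.2.1) = Rw tg σ l0 := fun σ => rfl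
      have := step h2 u (mix S f) l0 (tg l0)
        (fun σ => by
          have := hx (S, σ, l0, none, none) (by intro l h; simp at h)
          simpa only [gm, upd_none] using this)
        (fun σ l => by
          have := hx (S, σ, l0, none, some l) (by intro l h; simp at h)
          simpa only [gm, upd_none, upd_some] using this)
        (fun σ l => by
          rw [hrow]
          have := hx (S, σ, l0, some l, none) (by intro l h; simpa using hl0)
          simpa only [gm, upd_none, upd_some] using this)
        (fun σ l m hlm => by
          rw [hrow]
          have := hx (S, σ, l0, some l, some m) (by
            intro l' h
            simp only [Option.some.injEq] at h
            subst h
            exact ⟨hl0, by simpa using hlm.symm⟩)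
          simpa only [gm, upd_some] using this)
      have := dvd_add this ih
      simpa using this
  have huniv : mix univ f = tg := by ext l k; simp [mix]
  have h1 := hS univ
  rw [huniv] at h1
  have h3 : ¬ (p : ℤ) ∣ D u tg := by
    apply D_tg
    intro σ l
    have := hx (univ, σ, l, none, some l) (by intro l h; simp at h)
    simp only [gm, upd_none, upd_some] at this
    change ((Rw (mix univ f) σ).updateRow l u).det ≠ 0 at this
    rwa [huniv] at this
  have h4 : D u f ≠ 0 := by
    intro h
    rw [h, sub_zero] at h1
    exact h3 h1
  obtain ⟨σ, -, hσ⟩ := Finset.exists_ne_zero_of_sum_ne_zero h4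
  have hphi := right_ne_zero_of_mul hσ
  unfold phi at hphi
  by_contra hcon
  apply hphi
  rw [if_neg]
  exact fun ⟨c, hc⟩ => hcon ⟨σ, c, hc⟩

lemma limit_case (h2 : p ≠ 2) (x : E J p) :
    ∃ (σ : J → Equiv.Perm (ZMod p)) (c0 : ℝ) (c : J × K p → ℝ), 0 ≤ c0 ∧ (∀ l, 0 ≤ c l) ∧
      c0 + ∑ l, c l = 1 ∧ c ᵥ* Rw (Matrix.of x.1) σ = c0 • x.2 := by
  classical
  set Z : (J → Equiv.Perm (ZMod p)) → Set (E J p) := fun σ =>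
    Prod.snd '' {q : stdSimplex ℝ (Option (J × K p)) × E J p |
      (fun l => q.1.1 (some l)) ᵥ* Rw (Matrix.of q.2.1) σ = q.1.1 none • q.2.2} with hZ
  have hclosed : IsClosed (⋃ σ, Z σ) := by
    apply isClosed_iUnion_of_finite
    intro σ
    have : CompactSpace (stdSimplex ℝ (Option (J × K p))) :=
      isCompact_iff_compactSpace.mp (isCompact_stdSimplex ℝ _)
    apply isClosedMap_snd_of_compactSpace
    have c1 : ∀ l, Continuous fun q : stdSimplex ℝ (Option (J × K p)) × E J p => q.1.1 l :=
      fun l => (continuous_apply l).comp (continuous_subtype_val.comp continuous_fst)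
    apply isClosed_eq
    · apply continuous_pi
      intro k
      simp only [Matrix.vecMul, dotProduct, Rw, Matrix.of_apply]
      refine continuous_finsetSum _ fun l _ => (c1 _).mul (continuous_finsetSum _ fun m _ => ?_)
      refine Continuous.mul ?_ continuous_const
      exact (continuous_apply m).comp ((continuous_apply l).comp
        (continuous_fst.comp continuous_snd))
    · exact (c1 none).smul (continuous_snd.comp continuous_snd)
  have hdense : Dense (⋃ σ, Z σ) := by
    refine dense_E.mono ?_
    intro x hx
    obtain ⟨σ, c, hc, h⟩ := generic_case h2 x hx
    refine Set.mem_iUnion.mpr ⟨σ, ?_⟩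
    have hs : 0 < 1 + ∑ l, c l := by
      have : 0 ≤ ∑ l, c l := Finset.sum_nonneg fun l _ => (hc l).le
      linarith
    set s := 1 + ∑ l, c l with hsdef
    refine ⟨(⟨fun o => match o with | none => s⁻¹ | some l => s⁻¹ * c l, ?_, ?_⟩, x), ?_, rfl⟩
    · rintro (_ | l)
      · exact (inv_pos.mpr hs).le
      · exact (mul_pos (inv_pos.mpr hs) (hc l)).le
    · rw [Fintype.sum_option]
      simp only
      rw [← Finset.mul_sum]
      have : s⁻¹ + s⁻¹ * ∑ i, c i = s⁻¹ * s := by rw [hsdef]; ring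
      rw [this, inv_mul_cancel₀ hs.ne']
    · simp only [Set.mem_ofPred_eq]
      have : (fun l => s⁻¹ * c l) = s⁻¹ • c := rfl
      rw [this, Matrix.smul_vecMul, h]
  have hx : x ∈ ⋃ σ, Z σ := by
    rw [← hclosed.closure_eq]; exact hdense x
  obtain ⟨σ, ⟨q, y⟩, hq, rfl⟩ := Set.mem_iUnion.mp hx
  refine ⟨σ, q.1 none, fun l => q.1 (some l), q.2.1 _, fun l => q.2.1 _, ?_, hq⟩
  have := q.2.2
  rwa [Fintype.sum_option] at this

end gen

theorem core {p : ℕ} [hp : Fact p.Prime] (h2 : p ≠ 2) (d : ℕ)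
    (x : Fin (d + 1) → ZMod p → EuclideanSpace ℝ (Fin d)) :
    ∃ (τ : Fin (d + 1) → Equiv.Perm (ZMod p)) (P : EuclideanSpace ℝ (Fin d)),
      ∀ k, k ≠ 0 → P ∈ convexHull ℝ (Set.range fun j => x j (τ j k)) := by
  classical
  set xb : Fin (d + 1) → ZMod p → Fin (d + 1) → ℝ := fun j i => Fin.cons 1 (fun a => x j i a) with hxb
  obtain ⟨σ, c0, c, hc0, hc, hsum, heq⟩ := limit_case (J := Fin (d + 1)) h2
    (src (fun l => xb l.1 l.2.1), fun m => if m.1 = 0 then 1 else 0)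
  have hex : ∀ j i, 0 ≤ ex c j i := by
    intro j i
    unfold ex
    split_ifs
    · exact hc _
    · exact le_rfl
  set y : ZMod p → Fin (d + 1) → ℝ := fun i j' => ∑ j, ex c j ((σ j).symm i) * xb j ((σ j).symm i) j'
    with hy
  have hyk : ∀ k, k ≠ 0 → ∀ j', y k j' = y 0 j' + c0 * (if j' = 0 then 1 else 0) := by
    intro k hk j'
    have h := congrFun heq (j', ⟨k, hk⟩)
    have hY : ∀ i, y i j' = ∑ l : Fin (d + 1) × K p, c l * (xb l.1 l.2.1 j' * (if σ l.1 l.2.1 = i then 1 else 0)) := by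
      intro i
      rw [Fintype.sum_prod_type]
      simp only [hy]
      apply Finset.sum_congr rfl
      intro j _
      have := sum_K (fun l : Fin (d + 1) × K p => c l * xb l.1 l.2.1 j') j (σ j) i
      simp only at this
      have e : ∀ k : K p, c (j, k) * (xb j k.1 j' * (if σ j k.1 = i then 1 else 0))
         = c (j, k) * xb j k.1 j' * (if σ j k.1 = i then 1 else 0) := fun k => by ring
      simp only [e]
      rw [this]
      by_cases h0 : (σ j).symm i = 0
      · rw [h0]; simp
      · simp [ex, h0]
    simp only [Matrix.vecMul, dotProduct, Pi.smul_apply, smul_eq_mul] at h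
    have e2 : (Matrix.of (src (fun l : Fin (d + 1) × K p => xb l.1 l.2.1)) : Matrix _ _ ℝ)
      = src (fun l => xb l.1 l.2.1) := rfl
    simp only [e2, Rw_src, mul_sub, Finset.sum_sub_distrib] at h
    rw [hY, hY]
    linarith
  have hy0 : ∀ i, y i 0 = ∑ j, ex c j ((σ j).symm i) := by
    intro i; simp [hy, hxb]
  have htot : c0 + ∑ i, y i 0 = 1 := by
    rw [← hsum]
    congr 1
    simp only [hy0]
    rw [Finset.sum_comm, Fintype.sum_prod_type]
    apply Finset.sum_congr rfl
    intro j _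
    rw [Equiv.sum_comp (σ j).symm (fun i => ex c j i),
      ← Finset.add_sum_erase _ _ (mem_univ (0 : ZMod p)), ex_zero, zero_add]
    have hs : ∑ i ∈ univ.erase (0 : ZMod p), ex c j i = ∑ k : K p, ex c j k.1 :=
      Finset.sum_subtype _ (by simp) _
    rw [hs]
    simp
  have hnn : ∀ i, 0 ≤ y i 0 := fun i => by
    rw [hy0]; exact Finset.sum_nonneg fun j _ => hex j _
  set h := y 0 0 + c0 with hh
  have hkh : ∀ k, k ≠ 0 → y k 0 = h := fun k hk => by rw [hyk k hk]; simp [hh]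
  have hpos : 0 < h := by
    rcases lt_or_eq_of_le (add_nonneg (hnn 0) hc0) with h' | h'
    · exact h'
    · exfalso
      have e0 : c0 = 0 := by linarith [hnn 0]
      have e1 : y 0 0 = 0 := by linarith [hnn 0]
      have : ∀ i, y i 0 = 0 := by
        intro i
        by_cases hi : i = 0
        · rw [hi, e1]
        · rw [hkh i hi, hh, e0, e1, add_zero]
      simp [this, e0] at htot
  refine ⟨fun j => (σ j).symm, WithLp.toLp 2 (fun a => h⁻¹ * y 0 a.succ), ?_⟩
  intro k hk
  have hP : (WithLp.toLp 2 (fun a => h⁻¹ * y 0 a.succ) : EuclideanSpace ℝ (Fin d))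
      = ∑ j, (h⁻¹ * ex c j ((σ j).symm k)) • x j ((σ j).symm k) := by
    ext a
    have := hyk k hk a.succ
    simp only [Fin.succ_ne_zero, if_false, mul_zero, add_zero] at this
    rw [PiLp.toLp_apply, ← this]
    simp only [hy, hxb, Fin.cons_succ, Finset.mul_sum]
    simp [mul_assoc]
  rw [hP]
  apply (convex_convexHull ℝ _).sum_mem
  · intro j _
    exact mul_nonneg (inv_pos.mpr hpos).le (hex _ _)
  · rw [← Finset.mul_sum, ← hy0, hkh k hk, inv_mul_cancel₀ hpos.ne']
  · intro j _
    exact subset_convexHull ℝ _ ⟨j, rfl⟩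

end CT

theorem colorful_tverberg (d r t : ℕ) (hr : ∃ p k : ℕ, p.Prime ∧ r = p ^ k)
    (ht : 2 * r - 1 ≤ t) (X : Finset (EuclideanSpace ℝ (Fin d)))
    (hX : X.card = (d + 1) * t)
    (col : EuclideanSpace ℝ (Fin d) → Fin (d + 1))
    (hcol : ∀ c : Fin (d + 1), {x ∈ (X : Set (EuclideanSpace ℝ (Fin d))) | col x = c}.ncard = t) :
    ∃ S : Fin r → Finset (EuclideanSpace ℝ (Fin d)),
      (∀ i, S i ⊆ X) ∧
      (∀ i j, i ≠ j → Disjoint (S i) (S j)) ∧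
      (∀ i, (S i).card = d + 1) ∧
      (∀ i, ∀ c : Fin (d + 1), ∃ x ∈ S i, col x = c) ∧
      ∃ p : EuclideanSpace ℝ (Fin d), ∀ i,
        p ∈ convexHull ℝ (S i : Set (EuclideanSpace ℝ (Fin d))) := by
  classical
  have hr1 : 1 ≤ r := by
    obtain ⟨p, k, hp, rfl⟩ := hr
    exact Nat.one_le_pow _ _ hp.pos
  -- choose `q` points of each color
  have hpts : ∀ q : ℕ, q ≤ t → ∀ c : Fin (d + 1), ∃ g : Fin q → EuclideanSpace ℝ (Fin d),
      Function.Injective g ∧ ∀ i, g i ∈ X ∧ col (g i) = c := by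
    intro q hq c
    have hset : {x ∈ (X : Set (EuclideanSpace ℝ (Fin d))) | col x = c}
        = ((X.filter fun x => col x = c : Finset _) : Set (EuclideanSpace ℝ (Fin d))) := by
      ext x; simp
    have h1 := hcol c
    rw [hset, Set.ncard_coe_finset] at h1
    have h3 : Fintype.card (Fin q) ≤ Fintype.card (X.filter fun x => col x = c) := by
      simpa [h1] using hq
    obtain ⟨g⟩ := Function.Embedding.nonempty_of_card_le h3
    refine ⟨fun i => (g i).1, fun i j h => g.injective (Subtype.ext h), fun i => ?_⟩
    exact Finset.mem_filter.mp (g i).2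
  -- reduction to transversals
  suffices hmain : ∃ (g : Fin r → Fin (d + 1) → EuclideanSpace ℝ (Fin d)),
      (∀ i j, g i j ∈ X ∧ col (g i j) = j) ∧ (∀ j, Function.Injective fun i => g i j) ∧
      ∃ P, ∀ i, P ∈ convexHull ℝ (Set.range (g i)) by
    obtain ⟨g, hg, hinj, P, hP⟩ := hmain
    refine ⟨fun i => Finset.univ.image (g i), ?_, ?_, ?_, ?_, P, ?_⟩
    · intro i y hy
      simp only [Finset.mem_image, Finset.mem_univ, true_and] at hy
      obtain ⟨j, rfl⟩ := hy
      exact (hg i j).1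
    · intro i i' hne
      rw [Finset.disjoint_left]
      intro y hy hy'
      simp only [Finset.mem_image, Finset.mem_univ, true_and] at hy hy'
      obtain ⟨j, rfl⟩ := hy
      obtain ⟨j', h'⟩ := hy'
      have hj : j' = j := by rw [← (hg i' j').2, h', (hg i j).2]
      subst hj
      exact hne (hinj j' h').symm
    · intro i
      rw [Finset.card_image_of_injective]
      · simp
      · intro j j' h
        rw [← (hg i j).2, h, (hg i j').2]
    · intro i c
      exact ⟨g i c, by simp, (hg i c).2⟩
    · intro i
      simpa using hP i
  rcases Nat.lt_or_ge r 2 with hlt | hge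
  · have hreq : r = 1 := by omega
    subst hreq
    choose g hg1 hg2 using hpts 1 (by omega)
    refine ⟨fun i j => g j i, fun i j => hg2 j i, fun j => hg1 j, g 0 0, fun i => ?_⟩
    apply subset_convexHull
    exact ⟨0, by rw [Subsingleton.elim i 0]⟩
  · obtain ⟨p, hp, hrp, hp2⟩ := Nat.exists_prime_lt_and_le_two_mul r (by omega)
    have : Fact p.Prime := ⟨hp⟩
    have hpne : p ≠ 2 := by omega
    have hodd := hp.odd_of_ne_two hpne
    have hple : p ≤ t := by
      obtain ⟨a, ha⟩ := hodd
      omega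
    choose g hg1 hg2 using hpts p hple
    have e : ZMod p ≃ Fin p := (ZMod.finEquiv p).symm.toEquiv
    obtain ⟨τ, P, hP⟩ := CT.core hpne d (fun j i => g j (e i))
    refine ⟨fun i j => g j (e (τ j ((i.1 + 1 : ℕ) : ZMod p))), fun i j => hg2 j _, ?_, P, ?_⟩
    · intro j i i' h
      have h1 := (τ j).injective (e.injective (hg1 j h))
      rw [ZMod.natCast_eq_natCast_iff'] at h1
      rw [Nat.mod_eq_of_lt (by omega), Nat.mod_eq_of_lt (by omega)] at h1
      exact Fin.ext (by omega)
    · intro i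
      apply hP
      intro h
      rw [ZMod.natCast_eq_zero_iff] at h
      have := Nat.le_of_dvd (by omega) h
      omega
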